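/- Let G be a commutative group. Suppose N ≤ G is a submonoid for which there exist b ∈ N and ℓ ∈ ℕ such that Z_{N,ℓ}(b) is infinite. Then there exists a submonoid W of G containing N with Subgroup.closure (W : Set G) = ⊤ (so W is an undermonoid of G) such that Z_W(b) is infinite; in particular W is not an FFM. -/

import Mathlib

/-- The set of factorizations of `b` in the submonoid `S` of the group `G`. -/
def ZSet {G : Type*} [CommGroup G] (S : Submonoid G) (b : S) :
    Set (Multiset (Associates S)) :=
  {z | (∀ a ∈ z, Irreducible a) ∧ z.prod = Associates.mk b}

/-- The set of length-`ℓ` factorizations of `b` in `S`. -/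
def ZSetLen {G : Type*} [CommGroup G] (S : Submonoid G) (b : S) (ℓ : ℕ) :
    Set (Multiset (Associates S)) :=
  {z ∈ ZSet S b | Multiset.card z = ℓ}

/-- `S` is an FFM. -/
def IsFFM {G : Type*} [CommGroup G] (S : Submonoid G) : Prop :=
  ∀ b : S, (ZSet S b).Nonempty ∧ (ZSet S b).Finite

/-!
Since `b` has infinitely many factorizations in `N`, it is not a unit of `N`. By Zorn's lemma there
is a submonoid `P ≥ N` that is maximal among those omitting `b⁻¹`, and maximality forces
`P ∪ P⁻¹ = G`. The elements of `P` that do not divide `b` in `P` form an ideal `I` of `P`, so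
`W = N ∪ I` is a submonoid between `N` and `P`. No element of `I` divides `b` in `W`, hence `b` has
the same divisors in `W` as in `N` and its factorizations survive. On the other hand,
`x * b ^ 2 ∈ I` for every `x ∈ P`, so `W` generates `P`, and therefore `G`, as a group.
-/

section LiftsDivisors

variable {M K : Type*} [CommMonoid M] [CommMonoid K] {f : M →* K} {b x : M}

/-- The homomorphism induced by `f` on the quotients by units. -/
def associatesMap (f : M →* K) : Associates M →* Associates K where
  toFun := Quotient.map f fun _ _ h => h.map f
  map_one' := congrArg Associates.mk (map_one f)
  map_mul' := Associates.forall_associated.2 fun x => Associates.forall_associated.2 fun y =>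
    congrArg Associates.mk (map_mul f x y)

theorem associatesMap_mk (f : M →* K) (x : M) :
    associatesMap f (Associates.mk x) = Associates.mk (f x) :=
  rfl

/-- Every divisor of `f b` in the codomain comes from the domain. For an injective `f` this makes
`f` preserve the factorizations of `b`. -/
def LiftsDivisors (f : M →* K) (b : M) : Prop :=
  ∀ y, y ∣ f b → y ∈ Set.range f

namespace LiftsDivisors

theorem isUnit_of_map (h : LiftsDivisors f b) (hf : Function.Injective f) (hx : IsUnit (f x)) :
    IsUnit x := by
  obtain ⟨v, hxv⟩ := hx.exists_right_inv
  obtain ⟨w, rfl⟩ := h v (IsUnit.of_mul_eq_one_right _ hxv).dvd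
  exact .of_mul_eq_one w (hf (by rw [map_mul, hxv, map_one]))

theorem irreducible_map (h : LiftsDivisors f b) (hf : Function.Injective f)
    (hx : Irreducible x) (hxb : x ∣ b) : Irreducible (f x) := by
  refine ⟨fun hfx => hx.not_isUnit (h.isUnit_of_map hf hfx), fun u v huv => ?_⟩
  have hfxb : f x ∣ f b := map_dvd f hxb
  obtain ⟨u, rfl⟩ := h u ((Dvd.intro v huv.symm).trans hfxb)
  obtain ⟨v, rfl⟩ := h v ((Dvd.intro_left _ huv.symm).trans hfxb)
  exact (hx.isUnit_or_isUnit (hf (by rw [huv, map_mul]))).imp (.map f) (.map f)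

theorem associates (h : LiftsDivisors f b) :
    LiftsDivisors (associatesMap f) (Associates.mk b) := by
  refine Associates.forall_associated.2 fun y hy => ?_
  obtain ⟨x, rfl⟩ := h y (Associates.mk_dvd_mk.1 hy)
  exact ⟨Associates.mk x, rfl⟩

theorem associatesMap_injective (h : LiftsDivisors f b) (hf : Function.Injective f) :
    Function.Injective (associatesMap f) := by
  refine Associates.forall_associated.2 fun x => Associates.forall_associated.2 fun y hxy => ?_
  obtain ⟨u, hu⟩ := Associates.mk_eq_mk_iff_associated.1 hxy
  obtain ⟨w, hw⟩ := h u u.isUnit.dvd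
  have hw_unit : IsUnit w := h.isUnit_of_map hf (hw ▸ u.isUnit)
  have hxwy : x * w = y := hf (by rw [map_mul, hw, hu])
  exact Associates.mk_eq_mk_iff_associated.2 ⟨hw_unit.unit, hxwy⟩

end LiftsDivisors

end LiftsDivisors

section Factorizations

variable {G : Type*} [CommGroup G] {S T : Submonoid G} {b : S}

theorem zSet_finite_of_isUnit (hb : IsUnit b) : (ZSet S b).Finite := by
  refine (Set.finite_singleton 0).subset fun z ⟨hz, hzb⟩ => ?_
  rw [Associates.mk_eq_one.2 hb, Associates.prod_eq_one_iff] at hzb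
  exact Multiset.eq_zero_of_forall_notMem fun a ha => (hz a ha).ne_one (hzb a ha)

theorem inv_notMem_of_zSet_infinite (hb : (ZSet S b).Infinite) : (b : G)⁻¹ ∉ S := fun hinv =>
  hb (zSet_finite_of_isUnit (.of_mul_eq_one ⟨_, hinv⟩ (Subtype.ext (mul_inv_cancel (b : G)))))

theorem LiftsDivisors.map_mem_zSet {f : S →* T} (h : LiftsDivisors f b)
    (hf : Function.Injective f) {z : Multiset (Associates S)} (hz : z ∈ ZSet S b) :
    z.map (associatesMap f) ∈ ZSet T (f b) := by
  obtain ⟨hirr, hprod⟩ := hz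
  constructor
  · intro a' ha'
    obtain ⟨a, ha, rfl⟩ := Multiset.mem_map.1 ha'
    exact h.associates.irreducible_map (h.associatesMap_injective hf) (hirr a ha)
      (hprod ▸ Multiset.dvd_prod ha)
  · rw [Multiset.prod_hom, hprod, associatesMap_mk]

theorem LiftsDivisors.zSet_infinite {f : S →* T} (h : LiftsDivisors f b)
    (hf : Function.Injective f) (hb : (ZSet S b).Infinite) : (ZSet T (f b)).Infinite :=
  Set.infinite_of_injOn_mapsTo (Multiset.map_injective (h.associatesMap_injective hf)).injOn
    (fun _ => h.map_mem_zSet hf) hb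

end Factorizations

section MaximalOmitting

theorem exists_le_maximal_notMem {M : Type*} [MulOneClass M] {N : Submonoid M} {g : M}
    (hg : g ∉ N) : ∃ P, N ≤ P ∧ Maximal (fun Q : Submonoid M => g ∉ Q) P := by
  refine zorn_le_nonempty₀ {Q : Submonoid M | g ∉ Q} (fun c hc hchain Q hQ => ?_) N hg
  refine ⟨sSup c, fun hmem => ?_, fun _ => le_sSup⟩
  obtain ⟨R, hR, hgR⟩ := (Submonoid.mem_sSup_of_directedOn ⟨Q, hQ⟩ hchain.directedOn).1 hmem
  exact hc hR hgR

theorem exists_mul_pow_eq_of_maximal_notMem {M : Type*} [CommMonoid M] {P : Submonoid M} {g x : M}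
    (hP : Maximal (fun Q : Submonoid M => g ∉ Q) P) (hx : x ∉ P) :
    ∃ p ∈ P, ∃ m : ℕ, p * x ^ m = g := by
  have hlt : P < P ⊔ Submonoid.powers x :=
    left_lt_sup.2 fun hle => hx (hle (Submonoid.mem_powers x))
  obtain ⟨p, hp, _, ⟨m, rfl⟩, hpm⟩ := Submonoid.mem_sup.1 (not_not.1 (hP.not_prop_of_gt hlt))
  exact ⟨p, hp, m, hpm⟩

theorem inv_mem_of_inv_pow_mem {G : Type*} [Group G] {P : Submonoid G} {b : G} {k : ℕ}
    (hb : b ∈ P) (hk : k ≠ 0) (h : b⁻¹ ^ k ∈ P) : b⁻¹ ∈ P := by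
  obtain ⟨n, rfl⟩ := Nat.exists_eq_succ_of_ne_zero hk
  have hmul := P.mul_mem (P.pow_mem hb n) h
  rwa [pow_succ, ← mul_assoc, inv_pow, mul_inv_cancel, one_mul] at hmul

variable {G : Type*} [CommGroup G] {N P : Submonoid G} {b : G}

theorem isMulSpanning_of_maximal_inv_notMem (hb : b ∈ P)
    (hP : Maximal (fun Q : Submonoid G => b⁻¹ ∉ Q) P) : P.IsMulSpanning := by
  by_contra hspan
  simp only [Submonoid.IsMulSpanning, not_forall, not_or] at hspan
  obtain ⟨x, hx, hx'⟩ := hspan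
  obtain ⟨p, hp, m, hpm⟩ := exists_mul_pow_eq_of_maximal_notMem hP hx
  obtain ⟨q, hq, n, hqn⟩ := exists_mul_pow_eq_of_maximal_notMem hP hx'
  have hm : m ≠ 0 := by
    rintro rfl
    exact hP.prop (by simpa [← hpm] using hp)
  -- The powers of `x` cancel in `(p * x ^ m) ^ n * (q * x⁻¹ ^ n) ^ m`.
  have hpow : p ^ n * q ^ m = b⁻¹ ^ (n + m) := by
    calc p ^ n * q ^ m
      _ = (p * x ^ m) ^ n * (q * x⁻¹ ^ n) ^ m := by
        simp only [mul_pow, inv_pow, ← pow_mul, mul_comm n m]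
        rw [mul_mul_mul_comm, mul_inv_cancel, mul_one]
      _ = b⁻¹ ^ (n + m) := by rw [hpm, hqn, pow_add]
  exact hP.prop (inv_mem_of_inv_pow_mem hb (by lia)
    (hpow ▸ P.mul_mem (P.pow_mem hp n) (P.pow_mem hq m)))

theorem exists_isMulSpanning_inv_notMem (hb : b ∈ N) (hb' : b⁻¹ ∉ N) :
    ∃ P, N ≤ P ∧ P.IsMulSpanning ∧ b⁻¹ ∉ P := by
  obtain ⟨P, hNP, hP⟩ := exists_le_maximal_notMem hb'
  exact ⟨P, hNP, isMulSpanning_of_maximal_inv_notMem (hNP hb) hP, hP.prop⟩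

end MaximalOmitting

section AdjoinNondivisors

theorem closure_eq_top_of_isMulSpanning {G : Type*} [Group G] {P : Submonoid G}
    (hP : P.IsMulSpanning) : Subgroup.closure (P : Set G) = ⊤ :=
  eq_top_iff.2 fun x _ => (hP x).elim (fun hx => Subgroup.subset_closure hx)
    fun hx => inv_mem_iff.1 (Subgroup.subset_closure hx)

variable {G : Type*} [CommGroup G] {N P : Submonoid G} {b x y : G}

theorem div_mul_notMem (hx : x ∈ P) (hy : b / y ∉ P) : b / (x * y) ∉ P := fun h =>
  hy (by simpa only [div_mul_eq_div_div_swap, div_mul_cancel] using P.mul_mem h hx)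

/-- The submonoid obtained from `N ≤ P` by adjoining the ideal of `P` formed by the elements that
do not divide `b` in `P`. Divisibility of `b` by `g` in `P` is encoded as `b / g ∈ P`. -/
def adjoinNondivisors (hNP : N ≤ P) (b : G) : Submonoid G where
  carrier := {g | g ∈ N ∨ g ∈ P ∧ b / g ∉ P}
  one_mem' := .inl N.one_mem
  mul_mem' := by
    rintro x y (hx | ⟨hx, hbx⟩) (hy | ⟨hy, hby⟩)
    · exact .inl (N.mul_mem hx hy)
    · exact .inr ⟨P.mul_mem (hNP hx) hy, div_mul_notMem (hNP hx) hby⟩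
    · exact .inr ⟨P.mul_mem hx (hNP hy), mul_comm y x ▸ div_mul_notMem (hNP hy) hbx⟩
    · exact .inr ⟨P.mul_mem hx hy, div_mul_notMem hx hby⟩

theorem le_adjoinNondivisors (hNP : N ≤ P) (b : G) : N ≤ adjoinNondivisors hNP b :=
  fun _ => .inl

theorem adjoinNondivisors_le (hNP : N ≤ P) (b : G) : adjoinNondivisors hNP b ≤ P := by
  rintro x (hx | ⟨hx, -⟩)
  · exact hNP hx
  · exact hx

theorem liftsDivisors_inclusion_adjoinNondivisors (hNP : N ≤ P) (b : N) :
    LiftsDivisors (Submonoid.inclusion (le_adjoinNondivisors hNP (b : G))) b := by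
  rintro ⟨x, hx | ⟨_, hbx⟩⟩ ⟨y, hxy⟩
  · exact ⟨⟨x, hx⟩, rfl⟩
  · have hby : (b : G) / x = y := div_eq_iff_eq_mul'.2 (congrArg Subtype.val hxy)
    exact absurd (hby ▸ adjoinNondivisors_le hNP _ y.2) hbx

theorem mul_sq_mem_adjoinNondivisors (hNP : N ≤ P) (hb : b ∈ P) (hb' : b⁻¹ ∉ P) (hx : x ∈ P) :
    x * b ^ 2 ∈ adjoinNondivisors hNP b := by
  have hbb : b / b ^ 2 ∉ P := by
    rwa [pow_two, div_mul_cancel_left]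
  exact .inr ⟨P.mul_mem hx (P.pow_mem hb 2), div_mul_notMem hx hbb⟩

theorem closure_adjoinNondivisors (hNP : N ≤ P) (hb : b ∈ P) (hb' : b⁻¹ ∉ P) :
    Subgroup.closure (adjoinNondivisors hNP b : Set G) = Subgroup.closure (P : Set G) := by
  refine (Subgroup.closure_mono (adjoinNondivisors_le hNP b)).antisymm ?_
  refine (Subgroup.closure_le _).2 fun x hx => ?_
  have hmem : ∀ y ∈ P, y * b ^ 2 ∈ Subgroup.closure (adjoinNondivisors hNP b : Set G) :=
    fun y hy => Subgroup.subset_closure (mul_sq_mem_adjoinNondivisors hNP hb hb' hy)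
  have hdiv := div_mem (hmem x hx) (hmem 1 P.one_mem)
  rwa [mul_div_mul_right_eq_div, div_one] at hdiv

end AdjoinNondivisors

theorem group_bad_undermonoid_general {G : Type*} [CommGroup G] (N : Submonoid G)
    (b : G) (hb : b ∈ N) (hinf : (ZSet N ⟨b, hb⟩).Infinite) :
    ∃ W : Submonoid G, N ≤ W ∧ Subgroup.closure (W : Set G) = ⊤ ∧
      ∃ hbW : b ∈ W, (ZSet W ⟨b, hbW⟩).Infinite ∧ ¬ IsFFM W := by
  obtain ⟨P, hNP, hspan, hbP⟩ :=
    exists_isMulSpanning_inv_notMem hb (inv_notMem_of_zSet_infinite hinf)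
  have hNW := le_adjoinNondivisors hNP b
  have hclosure : Subgroup.closure (adjoinNondivisors hNP b : Set G) = ⊤ :=
    (closure_adjoinNondivisors hNP (hNP hb) hbP).trans (closure_eq_top_of_isMulSpanning hspan)
  have hinfW : (ZSet (adjoinNondivisors hNP b) ⟨b, hNW hb⟩).Infinite :=
    (liftsDivisors_inclusion_adjoinNondivisors hNP ⟨b, hb⟩).zSet_infinite
      (Submonoid.inclusion_injective hNW) hinf
  exact ⟨_, hNW, hclosure, hNW hb, hinfW, fun hffm => hinfW (hffm _).2⟩

/-- Bad submonoids produce bad undermonoids, group case: if a submonoid `N` of the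
commutative group `G` has an element `b` with infinitely many length-`ℓ`
factorizations, then there is a submonoid `W ⊇ N` generating `G` as a group (an
undermonoid) in which `b` has infinitely many factorizations; in particular `W` is
not an FFM. -/
theorem group_bad_undermonoid {G : Type*} [CommGroup G] (N : Submonoid G)
    (b : G) (hb : b ∈ N) (ℓ : ℕ) (hinf : (ZSetLen N ⟨b, hb⟩ ℓ).Infinite) :
    ∃ W : Submonoid G, N ≤ W ∧ Subgroup.closure (W : Set G) = ⊤ ∧
      ∃ hbW : b ∈ W, (ZSet W ⟨b, hbW⟩).Infinite ∧ ¬ IsFFM W :=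
  group_bad_undermonoid_general N b hb (hinf.mono fun _ hz => hz.1)
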